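/- For every τ ∈ H and every x ∈ ℝ, g_{τ+1}(x) = e(−x²/2) · g_τ(x). -/

import Mathlib

open Complex MeasureTheory
open scoped Classical

noncomputable section

/-- `e(a) = exp(2πia)`. -/
def e (a : ℂ) : ℂ := Complex.exp (2 * (Real.pi : ℂ) * Complex.I * a)

/-- The Fourier transform `F(g)(x) = ∫ g(w) e(wx) dw`. -/
def fourierT (g : ℝ → ℂ) (x : ℝ) : ℂ := ∫ w : ℝ, g w * e ((w * x : ℝ))

/-- The operator `E_σ(f)(x) = e(x²σ/2) ∫_0^x e(-w²σ/2) f(w) dw`. -/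
def Eop (σ : ℂ) (f : ℝ → ℂ) (x : ℝ) : ℂ :=
  e ((x : ℂ)^2 * σ / 2) * ∫ w in (0:ℝ)..x, e (-(w : ℂ)^2 * σ / 2) * f w

/-- `ω_τ(x) = e(-x²τ/2) ∑_{m ∈ ℤ+1/2, m ≥ |x|} e(m²τ/2 + m/2)`. -/
def omega (τ : ℂ) (x : ℝ) : ℂ :=
  e (-(x : ℂ)^2 * τ / 2) *
    ∑' m : ℤ, if |x| ≤ (m : ℝ) + 1/2 then
      e (((m : ℂ) + 1/2)^2 / 2 * τ + ((m : ℂ) + 1/2) / 2) else 0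

/-- `η³(τ) = -i ∑_{m ∈ ℤ+1/2} m e(m²τ/2 + m/2)`. -/
def eta3 (τ : ℂ) : ℂ :=
  -Complex.I * ∑' m : ℤ, ((m : ℂ) + 1/2) * e (((m : ℂ) + 1/2)^2 / 2 * τ + ((m : ℂ) + 1/2) / 2)

/-- The complementary error function. -/
def erfc (x : ℝ) : ℝ := (2 / Real.sqrt Real.pi) * ∫ t in Set.Ioi x, Real.exp (-t^2)

/-- `g⁺_τ`. -/
def gplus (τ : ℂ) (x : ℝ) : ℂ :=
  e (-(x : ℂ)^2 * τ / 2) * ((Real.sign x : ℂ) / (Complex.I * eta3 τ)) *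
    ∑' m : ℤ, if |x| < (m : ℝ) + 1/2 then
      (((m : ℝ) + 1/2 - |x| : ℝ) : ℂ) * e (((m : ℂ) + 1/2)^2 / 2 * τ + ((m : ℂ) + 1/2) / 2)
    else 0

/-- `g*_τ`. -/
def gstar (τ : ℂ) (x : ℝ) : ℂ :=
  e (-(x : ℂ)^2 * τ / 2) * ((Real.sign x : ℂ) / 2) *
    (erfc (Real.sqrt (2 * Real.pi * τ.im) * |x|) : ℂ)

/-- `g_τ = g⁺_τ - g*_τ`. -/
def gfun (τ : ℂ) (x : ℝ) : ℂ := gplus τ x - gstar τ x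

/-- The operator `ξ_k f = 2i v^k conj(∂f/∂τ̄)`, with `∂/∂τ̄ = (1/2)(∂/∂u + i ∂/∂v)`. -/
def xi (k : ℝ) (f : ℂ → ℂ) (τ : ℂ) : ℂ :=
  2 * Complex.I * ((τ.im ^ k : ℝ) : ℂ) *
    (starRingEnd ℂ) ((1/2 : ℂ) * (fderiv ℝ f τ 1 + Complex.I * fderiv ℝ f τ Complex.I))

/-- Sum of divisors function `σ₁`. -/
def sigma1 (n : ℕ) : ℕ := ∑ d ∈ Nat.divisors n, d

/-- The weight 2 Eisenstein series `E₂`. -/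
def E2 (τ : ℂ) : ℂ := 1 - 24 * ∑' n : ℕ, (sigma1 (n+1) : ℂ) * e ((n + 1 : ℂ) * τ)

/-- `ϑ̃_{N,h}`. -/
def tvtheta (N : ℕ) (h : ℝ) (τ : ℂ) : ℂ :=
  (if ∃ m : ℤ, h = (m : ℝ) + 1/2 then
      e ((h : ℂ) / 2) * E2 τ / (12 * (N : ℂ) * Complex.I * eta3 τ) else 0)
  + ∑' n : ℤ, gfun τ ((N : ℝ) * n + h)

/-- The Schwartz function `φ_τ(x,y) = √(2v)·x·e(x²τ/2 - y²τ̄/2)`. -/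
def Phi (τ : ℂ) (x y : ℝ) : ℂ :=
  (Real.sqrt (2 * τ.im) : ℂ) * (x : ℂ) *
    e ((x : ℂ)^2 * τ / 2 - (y : ℂ)^2 * (starRingEnd ℂ) τ / 2)

/-- The signature (1,1) bilinear form `B((a₁,a₂),(b₁,b₂)) = a₁b₂ + a₂b₁`. -/
def Bform (a b : ℝ × ℝ) : ℝ := a.1 * b.2 + a.2 * b.1

/-- `Z⁺_t = (t/√2, t⁻¹/√2)`. -/
def Zp (t : ℝ) : ℝ × ℝ := (t / Real.sqrt 2, t⁻¹ / Real.sqrt 2)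

/-- `Z⁻_t = (t/√2, -t⁻¹/√2)`. -/
def Zm (t : ℝ) : ℝ × ℝ := (t / Real.sqrt 2, -t⁻¹ / Real.sqrt 2)

end

theorem e_add' (a b : ℂ) : e (a + b) = e a * e b := by
  unfold e
  rw [← Complex.exp_add]
  ring_nf

theorem e_int' (n : ℤ) : e (n : ℂ) = 1 := by
  unfold e
  rw [← Complex.exp_int_mul_two_pi_mul_I n]
  ring_nf

theorem e_half_shift (τ : ℂ) (m : ℤ) :
    e (((m : ℂ) + 1/2)^2 / 2 * (τ + 1) + ((m : ℂ) + 1/2) / 2)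
      = e (1/8) * e (((m : ℂ) + 1/2)^2 / 2 * τ + ((m : ℂ) + 1/2) / 2) := by
  obtain ⟨k, hk⟩ := Int.even_mul_succ_self m
  have hk' : (m : ℂ) * (m + 1) = k + k := by exact_mod_cast hk
  have h : ((m : ℂ) + 1/2)^2 / 2 * (τ + 1) + ((m : ℂ) + 1/2) / 2
      = (1/8 + (((m : ℂ) + 1/2)^2 / 2 * τ + ((m : ℂ) + 1/2) / 2)) + (k : ℂ) := by
    linear_combination hk' / 2
  rw [h, e_add', e_add', e_int', mul_one]

theorem eta3_shift (τ : ℂ) : eta3 (τ + 1) = e (1/8) * eta3 τ := by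
  unfold eta3
  simp_rw [e_half_shift, mul_left_comm _ (e (1/8)) _]
  rw [tsum_mul_left]
  ring

theorem gplus_shift (τ : ℂ) (x : ℝ) :
    gplus (τ + 1) x = e (-(x : ℂ)^2 / 2) * gplus τ x := by
  have h8 : e (1/8) ≠ 0 := Complex.exp_ne_zero _
  have hx : -(x : ℂ)^2 * (τ + 1) / 2 = -(x : ℂ)^2 / 2 + -(x : ℂ)^2 * τ / 2 := by ring
  unfold gplus
  rw [eta3_shift, hx, e_add']
  simp_rw [e_half_shift, mul_left_comm _ (e (1/8)) _, ← mul_ite_zero]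
  rw [tsum_mul_left]
  have key : ∀ s η : ℂ, s / (Complex.I * (e (1/8) * η)) * e (1/8) = s / (Complex.I * η) := by
    intro s η
    rw [show Complex.I * (e (1/8) * η) = (Complex.I * η) * e (1/8) by ring,
      ← div_div, div_mul_cancel₀ _ h8]
  rw [← key (Real.sign x : ℂ) (eta3 τ)]
  ring

theorem gstar_shift (τ : ℂ) (x : ℝ) :
    gstar (τ + 1) x = e (-(x : ℂ)^2 / 2) * gstar τ x := by
  have hx : -(x : ℂ)^2 * (τ + 1) / 2 = -(x : ℂ)^2 / 2 + -(x : ℂ)^2 * τ / 2 := by ring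
  have him : (τ + 1).im = τ.im := by simp
  unfold gstar
  rw [hx, e_add', him]
  ring

/-- `g_{τ+1}(x) = e(-x²/2)·g_τ(x)`. -/
theorem gfun_translation (τ : ℂ) (hτ : 0 < τ.im) (x : ℝ) :
    gfun (τ + 1) x = e (-(x : ℂ)^2 / 2) * gfun τ x := by
  unfold gfun
  rw [gplus_shift, gstar_shift]
  ring
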